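/- Let N ≥ 5 be an integer, Ω ⊂ ℝ^N a nonempty bounded open set, x₀ ∈ Ω, and a, b : ℝ^N → ℝ continuous functions positive on the closure of Ω with a(x₀) = b(x₀) = γ₀ and γ₀ = min_{x∈Ω̄} a(x) = min_{x∈Ω̄} b(x). Suppose a admits the expansion of order k at x₀ with coefficient A_k > 0 and b admits the expansion of order l at x₀ with coefficient B_l > 0, where k = 2 and l = 2. Set m_N := N(N−2)(N+2)/(8(N−1)). Then for every λ > m_N (A₂ + B₂) there exist smooth functions u, v compactly supported in Ω with ‖u‖_{L^q(Ω)} = ‖v‖_{L^q(Ω)} = 1 such that F_λ(u,v) < γ₀ S. -/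

import Mathlib

open MeasureTheory Real Filter Topology

noncomputable section

lemma aux_int_one (N j s : ℕ) (h : j + N < 2 * s) :
    Integrable (fun y : EuclideanSpace ℝ (Fin N) => ‖y‖ ^ j / (1 + ‖y‖ ^ 2) ^ s) := by
  have h1 : Integrable (fun y : EuclideanSpace ℝ (Fin N) =>
      (1 + ‖y‖ ^ 2) ^ (-((2 * s - j : ℝ)) / 2)) := by
    apply integrable_rpow_neg_one_add_norm_sq
    rw [finrank_euclideanSpace, Fintype.card_fin]
    have : ((j + N : ℕ) : ℝ) < ((2 * s : ℕ) : ℝ) := by exact_mod_cast h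
    push_cast at this
    linarith
  refine h1.mono' (by
    apply Continuous.aestronglyMeasurable
    apply Continuous.div (by fun_prop) (by fun_prop)
    intro x; positivity) ?_
  refine Eventually.of_forall fun y => ?_
  have hp : 0 < 1 + ‖y‖ ^ 2 := by positivity
  rw [Real.norm_of_nonneg (by positivity)]
  have e : (1 + ‖y‖ ^ 2) ^ (-((2 * s - j : ℝ)) / 2)
      = (1 + ‖y‖ ^ 2) ^ ((j : ℝ) / 2) / (1 + ‖y‖ ^ 2) ^ s := by
    rw [← Real.rpow_natCast (1 + ‖y‖ ^ 2) s, ← Real.rpow_sub hp]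
    congr 1; ring
  rw [e]
  gcongr
  calc ‖y‖ ^ j = (‖y‖ ^ 2) ^ ((j : ℝ) / 2) := by
        rw [← Real.rpow_natCast, ← Real.rpow_natCast, ← Real.rpow_mul (norm_nonneg y)]
        congr 1; push_cast; ring
    _ ≤ _ := by
        apply Real.rpow_le_rpow (by positivity) (by linarith) (by positivity)

lemma aux_scale (N j s : ℕ) {e : ℝ} (he : 0 < e) (z : EuclideanSpace ℝ (Fin N)) :
    ‖z‖ ^ j / (e ^ 2 + ‖z‖ ^ 2) ^ s
      = e ^ j / e ^ (2 * s) * (‖e⁻¹ • z‖ ^ j / (1 + ‖e⁻¹ • z‖ ^ 2) ^ s) := by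
  rw [norm_smul, Real.norm_of_nonneg (by positivity)]
  have : 1 + (e⁻¹ * ‖z‖) ^ 2 = (e ^ 2 + ‖z‖ ^ 2) / e ^ 2 := by field_simp
  rw [this, div_pow, mul_pow, ← pow_mul, inv_pow]
  have : 0 < e ^ 2 + ‖z‖ ^ 2 := by positivity
  field_simp

lemma aux_int (N j s : ℕ) (h : j + N < 2 * s) {e : ℝ} (he : 0 < e) :
    Integrable (fun y : EuclideanSpace ℝ (Fin N) => ‖y‖ ^ j / (e ^ 2 + ‖y‖ ^ 2) ^ s) := by
  simp_rw [aux_scale N j s he]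
  apply Integrable.const_mul
  exact (integrable_comp_smul_iff volume (fun y : EuclideanSpace ℝ (Fin N) =>
    ‖y‖ ^ j / (1 + ‖y‖ ^ 2) ^ s) (by positivity)).2 (aux_int_one N j s h)

lemma aux_integral (N j s : ℕ) {e : ℝ} (he : 0 < e) :
    e ^ (2 * s) * (∫ y : EuclideanSpace ℝ (Fin N), ‖y‖ ^ j / (e ^ 2 + ‖y‖ ^ 2) ^ s)
      = e ^ j * e ^ N * ∫ y : EuclideanSpace ℝ (Fin N), ‖y‖ ^ j / (1 + ‖y‖ ^ 2) ^ s := by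
  simp_rw [aux_scale N j s he]
  rw [integral_const_mul, Measure.integral_comp_smul volume (fun y : EuclideanSpace ℝ (Fin N) =>
    ‖y‖ ^ j / (1 + ‖y‖ ^ 2) ^ s)]
  rw [finrank_euclideanSpace, Fintype.card_fin, smul_eq_mul, inv_pow, inv_inv,
    abs_of_pos (by positivity)]
  field_simp

lemma aux_intOn (m s : ℕ) (h : m + 1 < 2 * s) :
    Integrable (fun r : ℝ => r ^ m / (1 + r ^ 2) ^ s) := by
  have h1 : Integrable (fun y : ℝ =>
      (1 + ‖y‖ ^ 2) ^ (-((2 * s - m : ℝ)) / 2)) := by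
    apply integrable_rpow_neg_one_add_norm_sq
    rw [Module.finrank_self]
    have : ((m + 1 : ℕ) : ℝ) < ((2 * s : ℕ) : ℝ) := by exact_mod_cast h
    push_cast at this ⊢
    linarith
  refine h1.mono' (by
    apply Continuous.aestronglyMeasurable
    apply Continuous.div (by fun_prop) (by fun_prop)
    intro x; positivity) ?_
  refine Eventually.of_forall fun y => ?_
  have hp : 0 < 1 + ‖y‖ ^ 2 := by positivity
  have e0 : ‖y ^ m / (1 + y ^ 2) ^ s‖ = ‖y‖ ^ m / (1 + ‖y‖ ^ 2) ^ s := by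
    rw [norm_div, norm_pow, norm_pow, Real.norm_of_nonneg (by positivity : 0 ≤ 1 + y ^ 2)]
    simp
  rw [e0]
  have e : (1 + ‖y‖ ^ 2) ^ (-((2 * s - m : ℝ)) / 2)
      = (1 + ‖y‖ ^ 2) ^ ((m : ℝ) / 2) / (1 + ‖y‖ ^ 2) ^ s := by
    rw [← Real.rpow_natCast (1 + ‖y‖ ^ 2) s, ← Real.rpow_sub hp]
    congr 1; ring
  rw [e]
  gcongr
  calc ‖y‖ ^ m = (‖y‖ ^ 2) ^ ((m : ℝ) / 2) := by
        rw [← Real.rpow_natCast, ← Real.rpow_natCast, ← Real.rpow_mul (norm_nonneg y)]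
        congr 1; push_cast; ring
    _ ≤ _ := by
        apply Real.rpow_le_rpow (by positivity) (by linarith) (by positivity)

lemma aux_rec (m s : ℕ) (h : m + 1 < 2 * s) :
    2 * (s : ℝ) * (∫ r in Set.Ioi (0 : ℝ), r ^ (m + 2) / (1 + r ^ 2) ^ (s + 1))
      = (m + 1) * ∫ r in Set.Ioi (0 : ℝ), r ^ m / (1 + r ^ 2) ^ s := by
  have i1 := (aux_intOn m s h).integrableOn (s := Set.Ioi (0 : ℝ))
  have i2 := (aux_intOn (m + 2) (s + 1) (by omega)).integrableOn (s := Set.Ioi (0 : ℝ))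
  have hd : ∀ r ∈ Set.Ici (0 : ℝ), HasDerivAt (fun r : ℝ => r ^ (m + 1) / (1 + r ^ 2) ^ s)
      ((m + 1) * (r ^ m / (1 + r ^ 2) ^ s)
        - 2 * s * (r ^ (m + 2) / (1 + r ^ 2) ^ (s + 1))) r := by
    intro r _
    have hp : (1 + r ^ 2) ≠ 0 := by positivity
    have h1 : HasDerivAt (fun r : ℝ => r ^ (m + 1)) (((m + 1 : ℕ) : ℝ) * r ^ m) r := by
      simpa using hasDerivAt_pow (m + 1) r
    have h2 : HasDerivAt (fun r : ℝ => (1 + r ^ 2)) (2 * r) r := by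
      simpa using (hasDerivAt_pow 2 r).const_add 1
    obtain ⟨t, rfl⟩ : ∃ t, s = t + 1 := ⟨s - 1, by omega⟩
    have h3 := h2.pow (t + 1)
    have h4 := h1.div h3 (by simp only [Pi.pow_apply]; positivity)
    refine HasDerivAt.congr_deriv (f := fun r : ℝ => r ^ (m + 1) / (1 + r ^ 2) ^ (t + 1)) h4 ?_
    simp only [Pi.pow_apply, Nat.add_sub_cancel]
    push_cast
    field_simp
    ring
  have ht : Tendsto (fun r : ℝ => r ^ (m + 1) / (1 + r ^ 2) ^ s) atTop (𝓝 0) := by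
    have h0 : Tendsto (fun r : ℝ => r⁻¹) atTop (𝓝 0) := tendsto_inv_atTop_zero
    refine squeeze_zero' ?_ ?_ h0
    · filter_upwards [eventually_ge_atTop 0] with r hr
      positivity
    · filter_upwards [eventually_ge_atTop 1] with r hr
      have hr0 : 0 < r := by linarith
      rw [div_le_iff₀ (by positivity), inv_mul_eq_div, le_div_iff₀ hr0]
      calc r ^ (m + 1) * r = r ^ (m + 2) := by ring
        _ ≤ r ^ (2 * s) := pow_le_pow_right₀ hr (by omega)
        _ = (r ^ 2) ^ s := by rw [pow_mul]
        _ ≤ _ := by gcongr; linarith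
  have := integral_Ioi_of_hasDerivAt_of_tendsto' hd ((i1.const_mul _).sub (i2.const_mul _)) ht
  rw [integral_sub (i1.const_mul _) (i2.const_mul _), integral_const_mul, integral_const_mul] at this
  simp at this
  linarith

lemma aux_J (M : ℕ) (hM : 3 ≤ M) :
    4 * ((M : ℝ) + 1) * M * (∫ y : EuclideanSpace ℝ (Fin (M + 2)), ‖y‖ ^ 4 / (1 + ‖y‖ ^ 2) ^ (M + 2))
      = (M + 2) * (M + 4) * ∫ y : EuclideanSpace ℝ (Fin (M + 2)), ‖y‖ ^ 0 / (1 + ‖y‖ ^ 2) ^ M := by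
  have := integral_fun_norm_addHaar (volume : Measure (EuclideanSpace ℝ (Fin (M + 2))))
    (fun r : ℝ => r ^ 4 / (1 + r ^ 2) ^ (M + 2))
  rw [this]
  have := integral_fun_norm_addHaar (volume : Measure (EuclideanSpace ℝ (Fin (M + 2))))
    (fun r : ℝ => r ^ 0 / (1 + r ^ 2) ^ M)
  rw [this]
  rw [finrank_euclideanSpace, Fintype.card_fin]
  have r1 := aux_rec (M + 1) M (by omega)
  have r2 := aux_rec (M + 3) (M + 1) (by omega)
  have e1 : ∫ r in Set.Ioi (0 : ℝ), r ^ (M + 2 - 1) • (r ^ 4 / (1 + r ^ 2) ^ (M + 2))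
      = ∫ r in Set.Ioi (0 : ℝ), r ^ (M + 3 + 2) / (1 + r ^ 2) ^ (M + 1 + 1) := by
    congr 1; ext r
    rw [smul_eq_mul, show M + 2 - 1 = M + 1 by omega]; ring
  have e2 : ∫ r in Set.Ioi (0 : ℝ), r ^ (M + 2 - 1) • (r ^ 0 / (1 + r ^ 2) ^ M)
      = ∫ r in Set.Ioi (0 : ℝ), r ^ (M + 1) / (1 + r ^ 2) ^ M := by
    congr 1; ext r
    rw [smul_eq_mul, show M + 2 - 1 = M + 1 by omega]; ring
  rw [e1, e2]
  simp only [nsmul_eq_mul, smul_eq_mul]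
  push_cast at r1 r2 ⊢
  rw [show M + 1 + 2 = M + 3 by omega] at r1
  set X := ∫ r in Set.Ioi (0 : ℝ), r ^ (M + 3 + 2) / (1 + r ^ 2) ^ (M + 1 + 1)
  set Y := ∫ r in Set.Ioi (0 : ℝ), r ^ (M + 3) / (1 + r ^ 2) ^ (M + 1)
  set Z := ∫ r in Set.Ioi (0 : ℝ), r ^ (M + 1) / (1 + r ^ 2) ^ M
  have : 4 * ((M : ℝ) + 1) * M * X = (M + 2) * (M + 4) * Z := by
    linear_combination (2 * (M : ℝ)) * r2 + ((M : ℝ) + 4) * r1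
  generalize (volume.real (Metric.ball (0 : EuclideanSpace ℝ (Fin (M + 2))) 1)) = c
  linear_combination (((M : ℝ) + 2) * c) * this

/-- unnormalised bubble -/
def bub (M : ℕ) (e : ℝ) (z : EuclideanSpace ℝ (Fin (M + 2))) : ℝ :=
  (e ^ 2 + ‖z‖ ^ 2) ^ (-(M : ℝ) / 2)

lemma bub_contDiff (M : ℕ) {e : ℝ} (he : 0 < e) : ContDiff ℝ (⊤ : ℕ∞) (bub M e) := by
  unfold bub
  apply ContDiff.rpow_const_of_ne
  · exact contDiff_const.add (contDiff_norm_sq ℝ)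
  · intro x; positivity

lemma bub_fderiv_norm (M : ℕ) {e : ℝ} (he : 0 < e) (z : EuclideanSpace ℝ (Fin (M + 2))) :
    ‖fderiv ℝ (bub M e) z‖ ^ 2 = M ^ 2 * (‖z‖ ^ 2 / (e ^ 2 + ‖z‖ ^ 2) ^ (M + 2)) := by
  have hp : 0 < e ^ 2 + ‖z‖ ^ 2 := by positivity
  have h1 := ((hasStrictFDerivAt_norm_sq z).hasFDerivAt.const_add (e ^ 2)).rpow_const
    (p := -(M : ℝ) / 2) (Or.inl hp.ne')
  have h2 : fderiv ℝ (bub M e) z = _ := h1.fderiv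
  rw [h2, norm_smul, two_smul, ← two_smul ℝ, norm_smul, innerSL_apply_norm, norm_mul,
    Real.norm_of_nonneg (by positivity : 0 ≤ (e ^ 2 + ‖z‖ ^ 2) ^ (-(M : ℝ) / 2 - 1))]
  have h3 : ((e ^ 2 + ‖z‖ ^ 2) ^ (-(M : ℝ) / 2 - 1)) ^ 2 = ((e ^ 2 + ‖z‖ ^ 2) ^ (M + 2))⁻¹ := by
    rw [← Real.rpow_natCast _ 2, ← Real.rpow_mul hp.le, ← Real.rpow_natCast (e ^ 2 + ‖z‖ ^ 2) (M + 2), ← Real.rpow_neg hp.le]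
    congr 1; push_cast; ring
  have h4 : ‖-(M : ℝ) / 2‖ ^ 2 = (M : ℝ) ^ 2 / 4 := by
    rw [Real.norm_eq_abs, sq_abs]; ring
  rw [mul_pow, mul_pow, mul_pow, h3, h4]
  simp
  ring

lemma bub_sq (M : ℕ) {e : ℝ} (he : 0 < e) (z : EuclideanSpace ℝ (Fin (M + 2))) :
    bub M e z ^ 2 = ‖z‖ ^ 0 / (e ^ 2 + ‖z‖ ^ 2) ^ M := by
  have hp : 0 < e ^ 2 + ‖z‖ ^ 2 := by positivity
  unfold bub
  rw [← Real.rpow_natCast _ 2, ← Real.rpow_mul hp.le, pow_zero, one_div, ← Real.rpow_natCast (e ^ 2 + ‖z‖ ^ 2) M,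
    ← Real.rpow_neg hp.le]
  congr 1; push_cast; ring

lemma bub_q (M : ℕ) (hM : 3 ≤ M) {e : ℝ} (he : 0 < e) (z : EuclideanSpace ℝ (Fin (M + 2))) :
    bub M e z ^ (2 * ((M : ℝ) + 2) / M) = ‖z‖ ^ 0 / (e ^ 2 + ‖z‖ ^ 2) ^ (M + 2) := by
  have hp : 0 < e ^ 2 + ‖z‖ ^ 2 := by positivity
  have hM' : (M : ℝ) ≠ 0 := by positivity
  unfold bub
  rw [← Real.rpow_mul hp.le, pow_zero, one_div, ← Real.rpow_natCast (e ^ 2 + ‖z‖ ^ 2) (M + 2),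
    ← Real.rpow_neg hp.le]
  congr 1; push_cast; field_simp

/-- tail majorant -/
lemma aux_tail (N s : ℕ) {d : ℝ} (hd : 0 < d) {e : ℝ} (z : EuclideanSpace ℝ (Fin N))
    (hz : d ≤ ‖z‖) :
    ‖z‖ ^ 0 / (e ^ 2 + ‖z‖ ^ 2) ^ s
      ≤ ((1 + d ^ 2) / d ^ 2) ^ s * (‖z‖ ^ 0 / (1 + ‖z‖ ^ 2) ^ s) := by
  have hz0 : 0 < ‖z‖ := by linarith
  rw [pow_zero, mul_one_div, ← div_pow, ← one_div_pow]
  apply pow_le_pow_left₀ (by positivity)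
  rw [div_le_div_iff₀ (by positivity) (by positivity), div_mul_eq_mul_div, le_div_iff₀ (by positivity)]
  have : d ^ 2 ≤ ‖z‖ ^ 2 := by gcongr
  nlinarith [mul_nonneg (sq_nonneg d) (sq_nonneg e), sq_nonneg e]

/-- truncated bubble -/
def tb (M : ℕ) (f : ContDiffBump (0 : EuclideanSpace ℝ (Fin (M + 2)))) (e : ℝ)
    (z : EuclideanSpace ℝ (Fin (M + 2))) : ℝ := f z * bub M e z

lemma tb_contDiff (M : ℕ) (f : ContDiffBump (0 : EuclideanSpace ℝ (Fin (M + 2)))) {e : ℝ}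
    (he : 0 < e) : ContDiff ℝ (⊤ : ℕ∞) (tb M f e) :=
  f.contDiff.mul (bub_contDiff M he)

lemma tb_tsupport (M : ℕ) (f : ContDiffBump (0 : EuclideanSpace ℝ (Fin (M + 2)))) {e : ℝ} :
    tsupport (tb M f e) ⊆ Metric.closedBall 0 f.rOut := by
  rw [← f.tsupport_eq]
  exact tsupport_mul_subset_left

lemma tb_grad_in (M : ℕ) (f : ContDiffBump (0 : EuclideanSpace ℝ (Fin (M + 2)))) {e : ℝ}
    (he : 0 < e) (z : EuclideanSpace ℝ (Fin (M + 2))) (hz : ‖z‖ < f.rIn) :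
    ‖fderiv ℝ (tb M f e) z‖ ^ 2 = M ^ 2 * (‖z‖ ^ 2 / (e ^ 2 + ‖z‖ ^ 2) ^ (M + 2)) := by
  rw [← bub_fderiv_norm M he z]
  have : tb M f e =ᶠ[𝓝 z] bub M e := by
    filter_upwards [Metric.isOpen_ball.mem_nhds
      (show z ∈ Metric.ball (0 : EuclideanSpace ℝ (Fin (M + 2))) f.rIn by simpa using hz)] with y hy
    simp [tb, f.one_of_mem_closedBall (Metric.ball_subset_closedBall hy)]
  rw [this.fderiv_eq]

lemma tb_grad_out (M : ℕ) (f : ContDiffBump (0 : EuclideanSpace ℝ (Fin (M + 2)))) (R : ℝ) :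
    ∃ C : ℝ, 0 ≤ C ∧ ∀ e : ℝ, 0 < e → ∀ z : EuclideanSpace ℝ (Fin (M + 2)),
      f.rIn ≤ ‖z‖ → ‖z‖ ≤ R → ‖fderiv ℝ (tb M f e) z‖ ^ 2 ≤ C := by
  obtain ⟨Cf, hCf⟩ := (f.hasCompactSupport.fderiv ℝ).exists_bound_of_continuous
    ((f.contDiff (n := 1)).continuous_fderiv one_ne_zero)
  have hd := f.rIn_pos
  refine ⟨2 * (M ^ 2 * (R ^ 2 / (f.rIn ^ 2) ^ (M + 2))) + 2 * (1 / (f.rIn ^ 2) ^ M * Cf ^ 2),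
    by positivity, ?_⟩
  intro e he z hz hzR
  have h1 : fderiv ℝ (tb M f e) z = f z • fderiv ℝ (bub M e) z + bub M e z • fderiv ℝ f z := by
    have := fderiv_mul (x := z) (c := (f : EuclideanSpace ℝ (Fin (M + 2)) → ℝ)) (d := bub M e)
      (f.contDiff.differentiable one_ne_zero z)
      ((bub_contDiff M he).differentiable (by simp) z)
    exact this
  have h2 : ‖fderiv ℝ (tb M f e) z‖ ≤ ‖fderiv ℝ (bub M e) z‖ + |bub M e z| * Cf := by
    rw [h1]
    refine (norm_add_le _ _).trans ?_
    rw [norm_smul, norm_smul, Real.norm_eq_abs, Real.norm_eq_abs, abs_of_nonneg f.nonneg]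
    gcongr
    · exact mul_le_of_le_one_left (norm_nonneg _) f.le_one
    · exact hCf z
  have hdz : f.rIn ^ 2 ≤ e ^ 2 + ‖z‖ ^ 2 := by
    have : f.rIn ^ 2 ≤ ‖z‖ ^ 2 := by gcongr
    nlinarith [sq_nonneg e]
  have h3 : ‖fderiv ℝ (bub M e) z‖ ^ 2 ≤ M ^ 2 * (R ^ 2 / (f.rIn ^ 2) ^ (M + 2)) := by
    rw [bub_fderiv_norm M he]
    gcongr
  have h4 : |bub M e z| ^ 2 ≤ 1 / (f.rIn ^ 2) ^ M := by
    rw [sq_abs, bub_sq M he, pow_zero]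
    gcongr
  have h5 : |bub M e z| ^ 2 * Cf ^ 2 ≤ 1 / (f.rIn ^ 2) ^ M * Cf ^ 2 := by gcongr
  have h6 : ‖fderiv ℝ (tb M f e) z‖ ^ 2 ≤ (‖fderiv ℝ (bub M e) z‖ + |bub M e z| * Cf) ^ 2 := by
    gcongr
  nlinarith [sq_nonneg (‖fderiv ℝ (bub M e) z‖ - |bub M e z| * Cf)]

lemma tb_energy (M : ℕ) (hM : 3 ≤ M) (f : ContDiffBump (0 : EuclideanSpace ℝ (Fin (M + 2))))
    (Ω : Set (EuclideanSpace ℝ (Fin (M + 2)))) (hΩo : IsOpen Ω) (hΩb : Bornology.IsBounded Ω)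
    (x₀ : EuclideanSpace ℝ (Fin (M + 2))) (a : EuclideanSpace ℝ (Fin (M + 2)) → ℝ)
    (ha : Continuous a) (γ A' : ℝ) (hγ : 0 ≤ γ) (hA : 0 ≤ A')
    (hloc : ∀ x, ‖x - x₀‖ < f.rIn → a x ≤ γ + A' * ‖x - x₀‖ ^ 2) :
    ∃ C : ℝ, 0 ≤ C ∧ ∀ e : ℝ, 0 < e →
      (∫ x in Ω, a x * ‖fderiv ℝ (tb M f e) (x - x₀)‖ ^ 2)
        ≤ M ^ 2 * (γ * (∫ z : EuclideanSpace ℝ (Fin (M + 2)), ‖z‖ ^ 2 / (e ^ 2 + ‖z‖ ^ 2) ^ (M + 2))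
          + A' * ∫ z : EuclideanSpace ℝ (Fin (M + 2)), ‖z‖ ^ 4 / (e ^ 2 + ‖z‖ ^ 2) ^ (M + 2)) + C := by
  obtain ⟨Ca, hCa⟩ := (hΩb.isCompact_closure).exists_bound_of_continuousOn ha.continuousOn
  obtain ⟨R, hR⟩ := hΩb.exists_norm_le
  obtain ⟨C, hC0, hC⟩ := tb_grad_out M f (R + ‖x₀‖)
  refine ⟨|Ca| * C * volume.real Ω, by positivity, fun e he => ?_⟩
  have hfin : volume Ω ≠ ⊤ := hΩb.measure_lt_top.ne
  have : IsFiniteMeasure (volume.restrict Ω) := ⟨by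
    rw [Measure.restrict_apply_univ]; exact hΩb.measure_lt_top⟩
  set G : EuclideanSpace ℝ (Fin (M + 2)) → ℝ := fun z =>
    M ^ 2 * (γ * (‖z‖ ^ 2 / (e ^ 2 + ‖z‖ ^ 2) ^ (M + 2))
      + A' * (‖z‖ ^ 4 / (e ^ 2 + ‖z‖ ^ 2) ^ (M + 2))) with hG
  have i2 := aux_int (M + 2) 2 (M + 2) (by omega) he
  have i4 := aux_int (M + 2) 4 (M + 2) (by omega) he
  have iG : Integrable G := ((i2.const_mul γ).add (i4.const_mul A')).const_mul _
  have iG' : Integrable (fun x => G (x - x₀)) := iG.comp_sub_right x₀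
  have hGn : ∀ z, 0 ≤ G z := fun z => by simp only [hG]; positivity
  have hint : ∫ x, G (x - x₀) = M ^ 2 *
      (γ * (∫ z : EuclideanSpace ℝ (Fin (M + 2)), ‖z‖ ^ 2 / (e ^ 2 + ‖z‖ ^ 2) ^ (M + 2))
          + A' * ∫ z : EuclideanSpace ℝ (Fin (M + 2)), ‖z‖ ^ 4 / (e ^ 2 + ‖z‖ ^ 2) ^ (M + 2)) := by
    rw [integral_sub_right_eq_self G x₀, hG, integral_const_mul,
      integral_add (i2.const_mul γ) (i4.const_mul A'), integral_const_mul, integral_const_mul]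
  rw [← hint]
  have hcd : Continuous (fun x => a x * ‖fderiv ℝ (tb M f e) (x - x₀)‖ ^ 2) := by
    have := (tb_contDiff M f he).continuous_fderiv (by simp)
    exact ha.mul ((this.comp (continuous_sub_right x₀)).norm.pow 2)
  have hI : IntegrableOn (fun x => a x * ‖fderiv ℝ (tb M f e) (x - x₀)‖ ^ 2) Ω :=
    (hcd.continuousOn.integrableOn_compact hΩb.isCompact_closure).mono_set subset_closure
  calc (∫ x in Ω, a x * ‖fderiv ℝ (tb M f e) (x - x₀)‖ ^ 2)
      ≤ ∫ x in Ω, (G (x - x₀) + |Ca| * C) := by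
        apply setIntegral_mono_on hI (iG'.integrableOn.add (integrable_const _))
          hΩo.measurableSet
        intro x hx
        by_cases hz : ‖x - x₀‖ < f.rIn
        · rw [tb_grad_in M f he _ hz]
          have : a x * (M ^ 2 * (‖x - x₀‖ ^ 2 / (e ^ 2 + ‖x - x₀‖ ^ 2) ^ (M + 2)))
              ≤ (γ + A' * ‖x - x₀‖ ^ 2) *
                (M ^ 2 * (‖x - x₀‖ ^ 2 / (e ^ 2 + ‖x - x₀‖ ^ 2) ^ (M + 2))) := by
            gcongr
            exact hloc x hz
          have h2 : (γ + A' * ‖x - x₀‖ ^ 2) *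
                (M ^ 2 * (‖x - x₀‖ ^ 2 / (e ^ 2 + ‖x - x₀‖ ^ 2) ^ (M + 2))) = G (x - x₀) := by
            simp only [hG]; ring
          have h3 : 0 ≤ |Ca| * C := by positivity
          simp only [Pi.add_apply]
          linarith
        · have h1 := hC e he (x - x₀) (not_lt.1 hz) ((norm_sub_le _ _).trans (by
            gcongr; exact hR x hx))
          have h2 : a x ≤ |Ca| := (le_abs_self _).trans ((hCa x (subset_closure hx)).trans (le_abs_self _))
          have h3 : a x * ‖fderiv ℝ (tb M f e) (x - x₀)‖ ^ 2 ≤ |Ca| * C := by gcongr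
          simp only [Pi.add_apply]
          linarith [hGn (x - x₀)]
    _ = (∫ x in Ω, G (x - x₀)) + |Ca| * C * volume.real Ω := by
        rw [integral_add iG'.integrableOn (integrable_const _)]
        simp [mul_comm]
    _ ≤ _ := by
        have := setIntegral_le_integral (s := Ω) iG' (Eventually.of_forall fun x => hGn _)
        linarith

lemma tb_nonneg (M : ℕ) (f : ContDiffBump (0 : EuclideanSpace ℝ (Fin (M + 2)))) {e : ℝ} (he : 0 < e)
    (z : EuclideanSpace ℝ (Fin (M + 2))) : 0 ≤ tb M f e z := by
  unfold tb bub
  have := f.nonneg' z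
  positivity

lemma tb_lower (M : ℕ) (f : ContDiffBump (0 : EuclideanSpace ℝ (Fin (M + 2)))) (s : ℕ)
    (hs : M + 2 < 2 * s) :
    ∃ C : ℝ, 0 ≤ C ∧ ∀ e : ℝ, 0 < e → ∀ H : EuclideanSpace ℝ (Fin (M + 2)) → ℝ,
      Integrable H → (∀ z, 0 ≤ H z) →
      (∀ z, ‖z‖ ≤ f.rIn → H z = ‖z‖ ^ 0 / (e ^ 2 + ‖z‖ ^ 2) ^ s) →
      (∫ z : EuclideanSpace ℝ (Fin (M + 2)), ‖z‖ ^ 0 / (e ^ 2 + ‖z‖ ^ 2) ^ s) - C ≤ ∫ z, H z := by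
  have hd := f.rIn_pos
  set c := ((1 + f.rIn ^ 2) / f.rIn ^ 2) ^ s
  have hc : 0 ≤ c := by positivity
  have i1 := (aux_int_one (M + 2) 0 s (by omega)).const_mul c
  refine ⟨∫ z : EuclideanSpace ℝ (Fin (M + 2)), c * (‖z‖ ^ 0 / (1 + ‖z‖ ^ 2) ^ s),
    integral_nonneg fun z => by positivity, ?_⟩
  intro e he H hH hH0 hHin
  have i2 := aux_int (M + 2) 0 s (by omega) he
  rw [← integral_sub i2 i1]
  apply integral_mono (i2.sub i1) hH
  intro z
  by_cases hz : ‖z‖ ≤ f.rIn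
  · have h3 : 0 ≤ c * (‖z‖ ^ 0 / (1 + ‖z‖ ^ 2) ^ s) := by positivity
    have := hHin z hz
    simp only [Pi.sub_apply]
    linarith
  · have := aux_tail (M + 2) s hd (e := e) z (not_le.1 hz).le
    have h0 := hH0 z
    simp only [Pi.sub_apply]
    linarith

lemma loc_bound {E : Type*} [NormedAddCommGroup E] (a : E → ℝ) (x₀ : E) (A η : ℝ) (hη : 0 < η)
    (hexpa : Tendsto (fun x => (a x - a x₀ - A * ‖x - x₀‖ ^ (2 : ℝ)) / ‖x - x₀‖ ^ (2 : ℝ))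
      (𝓝[≠] x₀) (𝓝 0)) :
    ∃ d > 0, ∀ x, ‖x - x₀‖ < d → a x ≤ a x₀ + (A + η) * ‖x - x₀‖ ^ 2 := by
  have h1 := hexpa.eventually (gt_mem_nhds hη)
  rw [eventually_nhdsWithin_iff, Metric.eventually_nhds_iff] at h1
  obtain ⟨d, hd, h⟩ := h1
  refine ⟨d, hd, fun x hx => ?_⟩
  by_cases hxx : x = x₀
  · subst hxx; simp
  · have h2 := h (by rwa [dist_eq_norm]) hxx
    have h3 : 0 < ‖x - x₀‖ := norm_pos_iff.2 (sub_ne_zero.2 hxx)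
    rw [Real.rpow_two, div_lt_iff₀ (by positivity)] at h2
    linarith

lemma normalise {E : Type*} [NormedAddCommGroup E] [NormedSpace ℝ E] [MeasureSpace E]
    (Ω : Set E) (a b w : E → ℝ) (q θ γS lam : ℝ) (hq : 0 < q) (hθ : θ = 2 / q)
    (hw : ContDiff ℝ (⊤ : ℕ∞) w) (hwc : HasCompactSupport w) (hws : tsupport w ⊆ Ω)
    (hw0 : ∀ x, 0 ≤ w x)
    (hQ : 0 < ∫ x in Ω, w x ^ q)
    (hlt : (1 / 2) * (∫ x in Ω, a x * ‖fderiv ℝ w x‖ ^ 2)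
        + (1 / 2) * (∫ x in Ω, b x * ‖fderiv ℝ w x‖ ^ 2)
        - lam * (∫ x in Ω, w x ^ 2) < γS * (∫ x in Ω, w x ^ q) ^ θ) :
    ∃ u v : E → ℝ,
      ContDiff ℝ (⊤ : ℕ∞) u ∧ HasCompactSupport u ∧ tsupport u ⊆ Ω ∧
      ContDiff ℝ (⊤ : ℕ∞) v ∧ HasCompactSupport v ∧ tsupport v ⊆ Ω ∧
      (∫ x in Ω, |u x| ^ q) ^ (1 / q) = 1 ∧
      (∫ x in Ω, |v x| ^ q) ^ (1 / q) = 1 ∧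
      (1 / 2) * (∫ x in Ω, a x * ‖fderiv ℝ u x‖ ^ 2)
        + (1 / 2) * (∫ x in Ω, b x * ‖fderiv ℝ v x‖ ^ 2)
        - lam * ∫ x in Ω, u x * v x
      < γS := by
  set Q := ∫ x in Ω, w x ^ q with hQd
  set κ := Q ^ (-(1 / q)) with hκ
  have hκ0 : 0 < κ := Real.rpow_pos_of_pos hQ _
  have hκ2 : κ ^ 2 * Q ^ θ = 1 := by
    rw [hκ, ← Real.rpow_natCast _ 2, ← Real.rpow_mul hQ.le, ← Real.rpow_add hQ, hθ]
    convert Real.rpow_zero Q using 2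
    push_cast; ring
  have hκq : κ ^ q * Q = 1 := by
    rw [hκ, ← Real.rpow_mul hQ.le]
    have : -(1 / q) * q = -1 := by field_simp
    rw [this, Real.rpow_neg_one, inv_mul_cancel₀ hQ.ne']
  have s1 : ContDiff ℝ (⊤ : ℕ∞) (fun x => κ * w x) := contDiff_const.mul hw
  have s2 : HasCompactSupport (fun x => κ * w x) := hwc.mul_left
  have s3 : tsupport (fun x => κ * w x) ⊆ Ω :=
    (tsupport_mul_subset_right (f := fun _ => κ) (g := w)).trans hws
  have s4 : (∫ x in Ω, |κ * w x| ^ q) ^ (1 / q) = 1 := by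
    have : ∀ x, |κ * w x| ^ q = κ ^ q * w x ^ q := fun x => by
      rw [abs_of_nonneg (mul_nonneg hκ0.le (hw0 x)), Real.mul_rpow hκ0.le (hw0 x)]
    simp_rw [this]
    rw [integral_const_mul, ← hQd, hκq, Real.one_rpow]
  refine ⟨fun x => κ * w x, fun x => κ * w x, s1, s2, s3, s1, s2, s3, s4, s4, ?_⟩
  have hfd : ∀ x, ‖fderiv ℝ (fun x => κ * w x) x‖ ^ 2 = κ ^ 2 * ‖fderiv ℝ w x‖ ^ 2 := by
    intro x
    rw [fderiv_const_mul (hw.differentiable (by simp) x), norm_smul, mul_pow,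
      Real.norm_of_nonneg hκ0.le]
  have hG : ∀ c : E → ℝ, ∫ x in Ω, c x * ‖fderiv ℝ (fun x => κ * w x) x‖ ^ 2
      = κ ^ 2 * ∫ x in Ω, c x * ‖fderiv ℝ w x‖ ^ 2 := by
    intro c
    rw [← integral_const_mul]
    congr 1; ext x
    rw [hfd]; ring
  have hL : ∫ x in Ω, (κ * w x) * (κ * w x) = κ ^ 2 * ∫ x in Ω, w x ^ 2 := by
    rw [← integral_const_mul]
    congr 1; ext x
    ring
  rw [hG, hG, hL]
  have := mul_lt_mul_of_pos_left hlt (by positivity : 0 < κ ^ 2)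
  have e : κ ^ 2 * (γS * Q ^ θ) = γS := by
    rw [mul_left_comm, hκ2, mul_one]
  rw [e] at this
  linarith

lemma aux_P_pos (N s : ℕ) (h : N < 2 * s) :
    0 < ∫ y : EuclideanSpace ℝ (Fin N), ‖y‖ ^ 0 / (1 + ‖y‖ ^ 2) ^ s := by
  apply integral_pos_of_integrable_nonneg_nonzero (x := 0) _ (aux_int_one N 0 s (by omega))
  · intro y; simp only [Pi.zero_apply]; positivity
  · simp
  · apply Continuous.div (by fun_prop) (by fun_prop)
    intro x; positivity

lemma final_ineq (M : ℕ) (hM : 3 ≤ M) (e γ P2 P4 P0 I A B η lam Ca Cb CL CQ Ga Gb L Q X2 X4 Y0 Z : ℝ)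
    (he : 0 < e) (he1 : e ≤ 1) (hγ : 0 < γ) (hP2 : 0 ≤ P2) (hI : 0 < I) (hlam : 0 < lam)
    (hCa : 0 ≤ Ca) (hCb : 0 ≤ Cb) (hCL : 0 ≤ CL) (hCQ : 0 ≤ CQ)
    (hGa : Ga ≤ M ^ 2 * (γ * X2 + (A + η) * X4) + Ca)
    (hGb : Gb ≤ M ^ 2 * (γ * X2 + (B + η) * X4) + Cb)
    (hL : Y0 - CL ≤ L) (hQ : Z - CQ ≤ Q)
    (hX2 : e ^ (2 * (M + 2)) * X2 = e ^ 2 * e ^ (M + 2) * P2)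
    (hX4 : e ^ (2 * (M + 2)) * X4 = e ^ 4 * e ^ (M + 2) * P4)
    (hY0 : e ^ (2 * M) * Y0 = e ^ 0 * e ^ (M + 2) * P0)
    (hZ : e ^ (2 * (M + 2)) * Z = e ^ 0 * e ^ (M + 2) * I)
    (heQ : CQ * e < I)
    (hD : ((Ca + Cb) / 2 + lam * CL + γ * (M ^ 2 * P2) * CQ / I) * e
      < lam * P0 - M ^ 2 * ((A + B) / 2 + η) * P4) :
    0 < Q ∧ (1 / 2) * Ga + (1 / 2) * Gb - lam * L
      < γ * ((M ^ 2 * P2) / I ^ ((M : ℝ) / (M + 2))) * Q ^ ((M : ℝ) / (M + 2)) := by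
  set T := e ^ M with hT
  have hTp : 0 < T := by positivity
  have hX2' : T * X2 = P2 := by
    have : e ^ (M + 4) * (T * X2) = e ^ (M + 4) * P2 := by
      rw [hT]; linear_combination hX2
    exact mul_left_cancel₀ (by positivity) this
  have hX4' : T * X4 = e ^ 2 * P4 := by
    have : e ^ (M + 4) * (T * X4) = e ^ (M + 4) * (e ^ 2 * P4) := by
      rw [hT]; linear_combination hX4
    exact mul_left_cancel₀ (by positivity) this
  have hY0' : T * Y0 = e ^ 2 * P0 := by
    have : e ^ M * (T * Y0) = e ^ M * (e ^ 2 * P0) := by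
      rw [hT]; linear_combination hY0
    exact mul_left_cancel₀ (by positivity) this
  have hZ' : e ^ (M + 2) * Z = I := by
    have : e ^ (M + 2) * (e ^ (M + 2) * Z) = e ^ (M + 2) * I := by
      linear_combination hZ
    exact mul_left_cancel₀ (by positivity) this
  have hT3 : T ≤ e ^ 3 := pow_le_pow_of_le_one he.le he1 hM
  have hT3' : e ^ (M + 2) ≤ e ^ 3 := pow_le_pow_of_le_one he.le he1 (by omega)
  have hT1 : e ^ (M + 2) ≤ e := by
    simpa using pow_le_pow_of_le_one he.le he1 (show 1 ≤ M + 2 by omega)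
  have hEp : 0 < e ^ (M + 2) := by positivity
  set t := CQ / I * e ^ (M + 2) with ht
  have ht0 : 0 ≤ t := by positivity
  have ht1 : t < 1 := by
    rw [ht, div_mul_eq_mul_div, div_lt_one hI]
    nlinarith
  have hQ1 : I * (1 - t) ≤ e ^ (M + 2) * Q := by
    have h1 : I * (1 - t) = e ^ (M + 2) * (Z - CQ) := by
      rw [mul_sub, mul_sub, hZ', ht]; field_simp
    rw [h1]; gcongr
  have hQp : 0 < Q := by
    have : 0 < I * (1 - t) := mul_pos hI (by linarith)
    exact (mul_pos_iff_of_pos_left hEp).1 (this.trans_le hQ1)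
  refine ⟨hQp, ?_⟩
  set θ := (M : ℝ) / (M + 2) with hθ
  have hθ0 : 0 ≤ θ := by positivity
  have hθ1 : θ ≤ 1 := by rw [hθ, div_le_one (by positivity)]; linarith
  have hIθ : 0 < I ^ θ := Real.rpow_pos_of_pos hI _
  have hTQ : I ^ θ * (1 - t) ≤ T * Q ^ θ := by
    have h1 : (e ^ (M + 2) * Q) ^ θ = T * Q ^ θ := by
      rw [Real.mul_rpow hEp.le hQp.le, ← Real.rpow_natCast, ← Real.rpow_mul he.le, hT,
        ← Real.rpow_natCast e M]
      congr 2
      rw [hθ]; push_cast; field_simp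
    rw [← h1]
    calc I ^ θ * (1 - t) ≤ I ^ θ * (1 - t) ^ θ := by
          gcongr
          simpa using Real.rpow_le_rpow_of_exponent_ge (by linarith : 0 < 1 - t) (by linarith) hθ1
      _ = (I * (1 - t)) ^ θ := by rw [Real.mul_rpow hI.le (by linarith)]
      _ ≤ _ := Real.rpow_le_rpow (mul_nonneg hI.le (by linarith)) hQ1 hθ0
  have hR : γ * (M ^ 2 * P2) * (1 - t) ≤ T * (γ * ((M ^ 2 * P2) / I ^ θ) * Q ^ θ) := by
    have h1 : γ * (M ^ 2 * P2) * (1 - t) = γ * ((M ^ 2 * P2) / I ^ θ) * (I ^ θ * (1 - t)) := by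
      field_simp
    rw [h1]
    calc _ ≤ γ * ((M ^ 2 * P2) / I ^ θ) * (T * Q ^ θ) := by gcongr
      _ = _ := by ring
  have hLft : T * ((1 / 2) * Ga + (1 / 2) * Gb - lam * L)
      ≤ γ * (M ^ 2 * P2) + M ^ 2 * ((A + B) / 2 + η) * P4 * e ^ 2 - lam * P0 * e ^ 2
        + ((Ca + Cb) / 2 + lam * CL) * T := by
    have h1 : (1 / 2) * Ga + (1 / 2) * Gb - lam * L ≤
      (1 / 2) * (M ^ 2 * (γ * X2 + (A + η) * X4) + Ca)
        + (1 / 2) * (M ^ 2 * (γ * X2 + (B + η) * X4) + Cb) - lam * (Y0 - CL) := by gcongr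
    refine (mul_le_mul_of_nonneg_left h1 hTp.le).trans (le_of_eq ?_)
    linear_combination (M ^ 2 * γ) * hX2' + (M ^ 2 * ((A + B) / 2 + η)) * hX4' - lam * hY0'
  have hmain : ((Ca + Cb) / 2 + lam * CL) * T + γ * (M ^ 2 * P2) * t
      < (lam * P0 - M ^ 2 * ((A + B) / 2 + η) * P4) * e ^ 2 := by
    have h1 : ((Ca + Cb) / 2 + lam * CL) * T ≤ ((Ca + Cb) / 2 + lam * CL) * e ^ 3 := by gcongr
    have h2 : γ * (M ^ 2 * P2) * t ≤ γ * (M ^ 2 * P2) * CQ / I * e ^ 3 := by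
      have : γ * (M ^ 2 * P2) * t = γ * (M ^ 2 * P2) * CQ / I * e ^ (M + 2) := by rw [ht]; ring
      rw [this]; gcongr
    have h3 := mul_lt_mul_of_pos_right hD (by positivity : 0 < e ^ 2)
    calc ((Ca + Cb) / 2 + lam * CL) * T + γ * (M ^ 2 * P2) * t
        ≤ ((Ca + Cb) / 2 + lam * CL) * e ^ 3 + γ * (M ^ 2 * P2) * CQ / I * e ^ 3 := add_le_add h1 h2
      _ = ((Ca + Cb) / 2 + lam * CL + γ * (M ^ 2 * P2) * CQ / I) * e * e ^ 2 := by ring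
      _ < _ := h3
  refine lt_of_mul_lt_mul_left (lt_of_le_of_lt hLft (lt_of_lt_of_le ?_ hR)) hTp.le
  linarith

set_option maxHeartbeats 2000000 in



theorem stmt_4
    (N : ℕ) (hN : 5 ≤ N)
    (Ω : Set (EuclideanSpace ℝ (Fin N)))
    (hΩo : IsOpen Ω) (hΩb : Bornology.IsBounded Ω) (hΩne : Ω.Nonempty)
    (x₀ : EuclideanSpace ℝ (Fin N)) (hx₀ : x₀ ∈ Ω)
    (a b : EuclideanSpace ℝ (Fin N) → ℝ)
    (ha : Continuous a) (hb : Continuous b)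
    (hapos : ∀ x ∈ closure Ω, 0 < a x) (hbpos : ∀ x ∈ closure Ω, 0 < b x)
    (γ₀ : ℝ) (haγ : a x₀ = γ₀) (hbγ : b x₀ = γ₀)
    (hamin : ∀ x ∈ closure Ω, γ₀ ≤ a x) (hbmin : ∀ x ∈ closure Ω, γ₀ ≤ b x)
    (k l A B : ℝ) (hA : 0 < A) (hB : 0 < B)
    (hk : k = 2) (hl : l = 2)
    (hexpa : Tendsto (fun x => (a x - a x₀ - A * ‖x - x₀‖ ^ k) / ‖x - x₀‖ ^ k)
      (𝓝[≠] x₀) (𝓝 0))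
    (hexpb : Tendsto (fun x => (b x - b x₀ - B * ‖x - x₀‖ ^ l) / ‖x - x₀‖ ^ l)
      (𝓝[≠] x₀) (𝓝 0))
    (q : ℝ) (hq : q = 2 * (N : ℝ) / ((N : ℝ) - 2))
    (K₁ K₂ S : ℝ)
    (hK₁ : K₁ = ((N : ℝ) - 2) ^ 2 *
      ∫ y : EuclideanSpace ℝ (Fin N), ‖y‖ ^ 2 * (1 + ‖y‖ ^ 2) ^ (-(N : ℝ)))
    (hK₂ : K₂ = (∫ y : EuclideanSpace ℝ (Fin N), (1 + ‖y‖ ^ 2) ^ (-(N : ℝ)))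
      ^ (((N : ℝ) - 2) / (N : ℝ)))
    (hS : S = K₁ / K₂)
    (lam : ℝ) (hlam : (N : ℝ) * ((N : ℝ) - 2) * ((N : ℝ) + 2) / (8 * ((N : ℝ) - 1)) * (A + B) < lam) :
    ∃ u v : EuclideanSpace ℝ (Fin N) → ℝ,
      ContDiff ℝ (⊤ : ℕ∞) u ∧ HasCompactSupport u ∧ tsupport u ⊆ Ω ∧
      ContDiff ℝ (⊤ : ℕ∞) v ∧ HasCompactSupport v ∧ tsupport v ⊆ Ω ∧
      (∫ x in Ω, |u x| ^ q) ^ (1 / q) = 1 ∧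
      (∫ x in Ω, |v x| ^ q) ^ (1 / q) = 1 ∧
      (1 / 2) * (∫ x in Ω, a x * ‖fderiv ℝ u x‖ ^ 2)
        + (1 / 2) * (∫ x in Ω, b x * ‖fderiv ℝ v x‖ ^ 2)
        - lam * ∫ x in Ω, u x * v x
      < γ₀ * S := by
  obtain ⟨M, rfl⟩ : ∃ M, N = M + 2 := ⟨N - 2, by omega⟩
  have hM : 3 ≤ M := by omega
  subst hk hl
  have hM0 : (0 : ℝ) < M := by exact_mod_cast (by omega : 0 < M)
  have hγ : 0 < γ₀ := haγ ▸ hapos x₀ (subset_closure hx₀)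
  have hcast : (((M + 2 : ℕ) : ℝ)) - 2 = M := by push_cast; ring
  rw [hcast] at hq hK₁ hK₂ hlam
  set P2 := ∫ y : EuclideanSpace ℝ (Fin (M + 2)), ‖y‖ ^ 2 / (1 + ‖y‖ ^ 2) ^ (M + 2) with hP2
  set P4 := ∫ y : EuclideanSpace ℝ (Fin (M + 2)), ‖y‖ ^ 4 / (1 + ‖y‖ ^ 2) ^ (M + 2) with hP4
  set P0 := ∫ y : EuclideanSpace ℝ (Fin (M + 2)), ‖y‖ ^ 0 / (1 + ‖y‖ ^ 2) ^ M with hP0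
  set I := ∫ y : EuclideanSpace ℝ (Fin (M + 2)), ‖y‖ ^ 0 / (1 + ‖y‖ ^ 2) ^ (M + 2) with hI
  have hrp : ∀ y : EuclideanSpace ℝ (Fin (M + 2)),
      (1 + ‖y‖ ^ 2) ^ (-((M + 2 : ℕ) : ℝ)) = ((1 + ‖y‖ ^ 2) ^ (M + 2))⁻¹ := fun y => by
    rw [Real.rpow_neg (by positivity), Real.rpow_natCast]
  have hK₁' : K₁ = M ^ 2 * P2 := by
    rw [hK₁, hP2]; simp_rw [hrp]; rfl
  have hK₂' : K₂ = I ^ ((M : ℝ) / (M + 2)) := by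
    rw [hK₂, hI]; simp_rw [hrp, pow_zero, one_div]; push_cast; rfl
  have hP2p : 0 ≤ P2 := integral_nonneg fun y => by positivity
  have hP4p : 0 ≤ P4 := integral_nonneg fun y => by positivity
  have hP0p : 0 < P0 := aux_P_pos (M + 2) M (by omega)
  have hIp : 0 < I := aux_P_pos (M + 2) (M + 2) (by omega)
  have hJ : 4 * ((M : ℝ) + 1) * M * P4 = (M + 2) * (M + 4) * P0 := aux_J M hM
  have hlam0 : 0 < lam := by
    refine lt_trans ?_ hlam
    have : (0 : ℝ) < ((M + 2 : ℕ) : ℝ) - 1 := by push_cast; linarith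
    positivity
  have hD0 : 0 < lam * P0 - M ^ 2 * ((A + B) / 2) * P4 := by
    have h1 : M ^ 2 * ((A + B) / 2) * P4
        = ((M + 2 : ℕ) : ℝ) * M * (((M + 2 : ℕ) : ℝ) + 2) / (8 * (((M + 2 : ℕ) : ℝ) - 1))
          * (A + B) * P0 := by
      have h2 : ((M + 2 : ℕ) : ℝ) - 1 = M + 1 := by push_cast; ring
      rw [h2]; push_cast
      have h3 : ((M : ℝ) + 1) ≠ 0 := by positivity
      field_simp
      linear_combination 2 * hJ
    rw [h1, ← sub_mul]
    exact mul_pos (by linarith) hP0p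
  set η := (lam * P0 - M ^ 2 * ((A + B) / 2) * P4) / (2 * (M ^ 2 * P4 + 1)) with hη
  have hηp : 0 < η := by positivity
  have hD : 0 < lam * P0 - M ^ 2 * ((A + B) / 2 + η) * P4 := by
    have h1 : 2 * (η * (M ^ 2 * P4 + 1)) = lam * P0 - M ^ 2 * ((A + B) / 2) * P4 := by
      rw [hη]; field_simp
    have h2 : 0 ≤ η * (M ^ 2 * P4) := by positivity
    linarith
  obtain ⟨d1, hd1, hl1⟩ := loc_bound a x₀ A η hηp hexpa
  obtain ⟨d2, hd2, hl2⟩ := loc_bound b x₀ B η hηp hexpb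
  obtain ⟨d3, hd3, hl3⟩ := Metric.nhds_basis_closedBall.mem_iff.1 (hΩo.mem_nhds hx₀)
  set d := min d1 (min d2 (d3 / 2)) with hd
  have hdp : 0 < d := by positivity
  have hdd1 : d ≤ d1 := min_le_left _ _
  have hdd2 : d ≤ d2 := (min_le_right _ _).trans (min_le_left _ _)
  have hdd3 : d ≤ d3 / 2 := (min_le_right _ _).trans (min_le_right _ _)
  let f : ContDiffBump (0 : EuclideanSpace ℝ (Fin (M + 2))) := ⟨d, 2 * d, hdp, by linarith⟩
  have hfin : f.rIn = d := rfl
  have hfout : f.rOut = 2 * d := rfl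
  obtain ⟨Ca, hCa0, hCa⟩ := tb_energy M hM f Ω hΩo hΩb x₀ a ha γ₀ (A + η) hγ.le (by positivity)
    (fun x hx => haγ ▸ hl1 x (by linarith))
  obtain ⟨Cb, hCb0, hCb⟩ := tb_energy M hM f Ω hΩo hΩb x₀ b hb γ₀ (B + η) hγ.le (by positivity)
    (fun x hx => hbγ ▸ hl2 x (by linarith))
  obtain ⟨CL, hCL0, hCL⟩ := tb_lower M f M (by omega)
  obtain ⟨CQ, hCQ0, hCQ⟩ := tb_lower M f (M + 2) (by omega)
  set D := lam * P0 - M ^ 2 * ((A + B) / 2 + η) * P4 with hDd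
  set C := (Ca + Cb) / 2 + lam * CL + γ₀ * (M ^ 2 * P2) * CQ / I with hC
  have hC0 : 0 ≤ C := by positivity
  obtain ⟨e, he, he1, heQ, heD⟩ : ∃ e : ℝ, 0 < e ∧ e ≤ 1 ∧ CQ * e < I ∧ C * e < D := by
    refine ⟨min 1 (min (I / (CQ + 1)) (D / (C + 1))), by positivity, min_le_left _ _, ?_, ?_⟩
    · have h1 : min 1 (min (I / (CQ + 1)) (D / (C + 1))) ≤ I / (CQ + 1) :=
        (min_le_right _ _).trans (min_le_left _ _)
      calc _ ≤ CQ * (I / (CQ + 1)) := by gcongr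
        _ < I := by rw [mul_div_assoc', div_lt_iff₀ (by positivity)]; linarith
    · have h1 : min 1 (min (I / (CQ + 1)) (D / (C + 1))) ≤ D / (C + 1) :=
        (min_le_right _ _).trans (min_le_right _ _)
      calc _ ≤ C * (D / (C + 1)) := by gcongr
        _ < D := by rw [mul_div_assoc', div_lt_iff₀ (by positivity)]; linarith
  have hqp : 0 < q := by rw [hq]; positivity
  have hq' : q = 2 * ((M : ℝ) + 2) / M := by rw [hq]; push_cast; rfl
  have hWc : HasCompactSupport (tb M f e) :=
    HasCompactSupport.of_support_subset_isCompact (isCompact_closedBall 0 f.rOut)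
      ((subset_tsupport _).trans (tb_tsupport M f))
  have hWs := tb_contDiff M f he
  have hW0 := tb_nonneg M f he
  set w : EuclideanSpace ℝ (Fin (M + 2)) → ℝ := fun x => tb M f e (x - x₀) with hw
  have hwsupp : tsupport w ⊆ Metric.closedBall x₀ (2 * d) := by
    apply closure_minimal _ Metric.isClosed_closedBall
    intro x hx
    have := tb_tsupport M f (subset_tsupport _ (show x - x₀ ∈ Function.support (tb M f e) from hx))
    rw [mem_closedBall_zero_iff] at this
    rw [mem_closedBall_iff_norm]; exact this
  have hwΩ : tsupport w ⊆ Ω :=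
    hwsupp.trans ((Metric.closedBall_subset_closedBall (by linarith)).trans hl3)
  have hwout : ∀ x, x ∉ Ω → w x = 0 := fun x hx =>
    image_eq_zero_of_notMem_tsupport fun h => hx (hwΩ h)
  have hL : ∫ x in Ω, w x ^ 2 = ∫ z, tb M f e z ^ 2 := by
    rw [setIntegral_eq_integral_of_forall_compl_eq_zero (fun x hx => by simp [hwout x hx])]
    exact integral_sub_right_eq_self (fun z => tb M f e z ^ 2) x₀
  have hQ : ∫ x in Ω, w x ^ q = ∫ z, tb M f e z ^ q := by
    rw [setIntegral_eq_integral_of_forall_compl_eq_zero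
      (fun x hx => by simp [hwout x hx, Real.zero_rpow hqp.ne'])]
    exact integral_sub_right_eq_self (fun z => tb M f e z ^ q) x₀
  have hin : ∀ z : EuclideanSpace ℝ (Fin (M + 2)), ‖z‖ ≤ f.rIn → tb M f e z = bub M e z := by
    intro z hz
    rw [tb, f.one_of_mem_closedBall (by simpa using hz), one_mul]
  have hLlow := hCL e he (fun z => tb M f e z ^ 2)
    (Continuous.integrable_of_hasCompactSupport (f := fun z => tb M f e z ^ 2)
      (hWs.continuous.pow 2)
      (hWc.comp_left (g := fun t : ℝ => t ^ 2) (by simp)))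
    (fun z => by positivity) (fun z hz => by rw [← bub_sq M he, hin z hz])
  have hQlow := hCQ e he (fun z => tb M f e z ^ q)
    ((hWs.continuous.rpow_const (fun _ => Or.inr hqp.le)).integrable_of_hasCompactSupport
      (hWc.comp_left (g := fun t : ℝ => t ^ q) (Real.zero_rpow hqp.ne')))
    (fun z => Real.rpow_nonneg (hW0 z) _) (fun z hz => by
      rw [← bub_q M hM he, ← hq', hin z hz])
  rw [← hL] at hLlow
  rw [← hQ] at hQlow
  have hfd : ∀ x, fderiv ℝ w x = fderiv ℝ (tb M f e) (x - x₀) := fun x => fderiv_comp_sub x₀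
  have hfi := final_ineq M hM e γ₀ P2 P4 P0 I A B η lam Ca Cb CL CQ _ _ _ _ _ _ _ _ he he1 hγ hP2p hIp
    hlam0 hCa0 hCb0 hCL0 hCQ0 (hCa e he) (hCb e he) hLlow hQlow
    (aux_integral (M + 2) 2 (M + 2) he) (aux_integral (M + 2) 4 (M + 2) he)
    (aux_integral (M + 2) 0 M he) (aux_integral (M + 2) 0 (M + 2) he) heQ heD
  have hθ : (M : ℝ) / (M + 2) = 2 / q := by rw [hq']; field_simp
  refine normalise Ω a b w q ((M : ℝ) / (M + 2)) (γ₀ * S) lam hqp hθ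
    (hWs.comp (contDiff_id.sub contDiff_const))
    (HasCompactSupport.of_support_subset_isCompact (isCompact_closedBall x₀ (2 * d))
      ((subset_tsupport _).trans hwsupp)) hwΩ (fun x => hW0 _) hfi.1 ?_
  simp_rw [hfd]
  rw [hS, hK₁', hK₂']
  exact hfi.2
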